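/- Let θ > 0, 0 < s < r, and Y : B̄_r → ℝ^m be a smooth vector field flat at the origin with ‖Y‖_{0,r} < (r−s)·θ and ‖Y‖_{1,r} < θ, where θ is small enough (depending only on m) that the time-one flow φ_Y : B̄_s → B_r is defined. Then for all n, k ∈ ℕ there exists a constant C = C(n,k,r) > 0, depending continuously on r, such that for every smooth function f on B̄_r flat at the origin, ⟨f ∘ φ_Y⟩_{n,k,s} ≤ C · ( ⟨f⟩_{n,k,r} + ⟨f⟩_{0,k,r} · ‖Y‖_{n+1,r} ). -/

import Mathlib

open Metric Set

/-- The `C^n` norm of a vector field on the closed ball. -/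
noncomputable def cnNorm (m : ℕ) (r : ℝ) (n : ℕ)
    (F : EuclideanSpace ℝ (Fin m) → EuclideanSpace ℝ (Fin m)) : ℝ :=
  ⨆ p : (closedBall (0 : EuclideanSpace ℝ (Fin m)) r :
      Set (EuclideanSpace ℝ (Fin m))) × Fin (n + 1),
    ‖iteratedFDerivWithin ℝ p.2 F (closedBall 0 r) p.1‖

/-- A vector field flat at the origin. -/
def FlatVF (m : ℕ) (r : ℝ)
    (V : EuclideanSpace ℝ (Fin m) → EuclideanSpace ℝ (Fin m)) : Prop :=
  ∀ i : ℕ, iteratedFDerivWithin ℝ i V (closedBall 0 r) 0 = 0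

/-- The weighted norm `⟨f⟩_{n,k,r}` on flat functions on the closed ball. -/
noncomputable def flatNorm (m : ℕ) (r : ℝ) (n k : ℕ)
    (f : EuclideanSpace ℝ (Fin m) → ℝ) : ℝ :=
  ⨆ p : (closedBall (0 : EuclideanSpace ℝ (Fin m)) r \ {0} :
      Set (EuclideanSpace ℝ (Fin m))) × Fin (n + 1),
    ‖(p.1 : EuclideanSpace ℝ (Fin m))‖ ^ (-(k : ℤ)) *
      ‖iteratedFDerivWithin ℝ p.2 f (closedBall 0 r) p.1‖


section Interp

variable {E F : Type*} [NormedAddCommGroup E] [NormedSpace ℝ E]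
  [NormedAddCommGroup F] [NormedSpace ℝ F]

lemma fp_taylor2 {S : Set E} (hS : Convex ℝ S) {G : E → F} {G' : E → E →L[ℝ] F} {c : ℝ}
    (hc : 0 ≤ c)
    (hG : ∀ x ∈ S, HasFDerivWithinAt G (G' x) S x)
    (hL : ∀ x ∈ S, ∀ y ∈ S, ‖G' y - G' x‖ ≤ c * ‖y - x‖) {x y : E} (hx : x ∈ S) (hy : y ∈ S) :
    ‖G y - G x - G' x (y - x)‖ ≤ c * ‖y - x‖ ^ 2 := by
  have hsub : segment ℝ x y ⊆ S := hS.segment_subset hx hy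
  have := (convex_segment x y).norm_image_sub_le_of_norm_hasFDerivWithin_le'
    (f := G) (f' := G') (φ := G' x) (C := c * ‖y - x‖)
    (fun z hz => (hG z (hsub hz)).mono hsub)
    (fun z hz => (hL x hx z (hsub hz)).trans (by
      gcongr
      obtain ⟨t, ht, rfl⟩ := (segment_eq_image' ℝ x y ▸ hz : z ∈ Set.image (fun θ : ℝ => x + θ • (y - x)) (Icc 0 1))
      simp only [add_sub_cancel_left, norm_smul, Real.norm_eq_abs, abs_of_nonneg ht.1]
      exact mul_le_of_le_one_left (norm_nonneg _) ht.2))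
    (left_mem_segment ℝ x y) (right_mem_segment ℝ x y)
  calc _ ≤ _ := this
    _ = _ := by ring

lemma fp_landau {R : ℝ} (hR : 0 < R) {G : E → F} {G' : E → E →L[ℝ] F} {a c : ℝ}
    (hc : 0 ≤ c)
    (hG : ∀ x ∈ closedBall (0 : E) R, HasFDerivWithinAt G (G' x) (closedBall 0 R) x)
    (hL : ∀ x ∈ closedBall (0 : E) R, ∀ y ∈ closedBall (0 : E) R,
      ‖G' y - G' x‖ ≤ c * ‖y - x‖)
    (ha : ∀ x ∈ closedBall (0 : E) R, ‖G x‖ ≤ a) {t : ℝ} (ht : 0 < t) (ht1 : t ≤ 1)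
    {x : E} (hx : x ∈ closedBall (0 : E) R) :
    R * ‖G' x‖ ≤ 4 * a / t + 8 * R ^ 2 * c * t := by
  have ha0 : 0 ≤ a := (norm_nonneg _).trans (ha x hx)
  have key : ∀ w ∈ closedBall (0 : E) R, ‖G' x (w - x)‖ ≤ 2 * a / t + 4 * R ^ 2 * c * t := by
    intro w hw
    have hy : x + t • (w - x) ∈ closedBall (0 : E) R :=
      (convex_closedBall (0 : E) R).add_smul_sub_mem hx hw ⟨ht.le, ht1⟩
    have h1 := fp_taylor2 (convex_closedBall (0 : E) R) hc hG hL hx hy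
    rw [add_sub_cancel_left] at h1
    have hn : ‖w - x‖ ≤ 2 * R := by
      have h1 := norm_sub_le w x
      have h2 := mem_closedBall_zero_iff.1 hw
      have h3 := mem_closedBall_zero_iff.1 hx
      linarith
    have h2 : ‖t • (w - x)‖ ^ 2 ≤ (t * (2 * R)) ^ 2 := by
      rw [norm_smul, Real.norm_eq_abs, abs_of_pos ht]; gcongr
    have h3 : ‖G' x (t • (w - x))‖ ≤ 2 * a + c * (t * (2 * R)) ^ 2 := by
      have e : G' x (t • (w - x)) = G (x + t • (w - x)) - G x -
        (G (x + t • (w - x)) - G x - G' x (t • (w - x))) := by abel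
      rw [e]
      refine (norm_sub_le _ _).trans ?_
      have := norm_sub_le (G (x + t • (w - x))) (G x)
      have h5 := ha _ hy
      have h6 := ha _ hx
      have h7 := mul_le_mul_of_nonneg_left h2 hc
      linarith
    rw [map_smul, norm_smul, Real.norm_eq_abs, abs_of_pos ht] at h3
    have : ‖G' x (w - x)‖ ≤ (2 * a + c * (t * (2 * R)) ^ 2) / t := by
      rw [le_div_iff₀ ht]; linarith
    refine this.trans (le_of_eq ?_)
    field_simp
    ring
  have hb : 0 ≤ 4 * a / t + 8 * R ^ 2 * c * t := by positivity
  have : ‖G' x‖ ≤ (4 * a / t + 8 * R ^ 2 * c * t) / R := by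
    refine ContinuousLinearMap.opNorm_le_bound _ (by positivity) fun v => ?_
    rcases eq_or_ne v 0 with rfl | hv
    · simp
    have hv' : 0 < ‖v‖ := norm_pos_iff.2 hv
    set w := (R / ‖v‖) • v with hw
    have hwm : w ∈ closedBall (0 : E) R := by
      rw [mem_closedBall_zero_iff, hw, norm_smul, Real.norm_eq_abs, abs_of_pos (by positivity)]
      field_simp; exact le_rfl
    have k1 := key w hwm
    have k2 := key 0 (by simp [hR.le])
    have e : G' x w = G' x (w - x) - G' x (0 - x) := by rw [← map_sub]; congr 1; abel
    have k3 : ‖G' x w‖ ≤ 4 * a / t + 8 * R ^ 2 * c * t := by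
      rw [e]
      refine (norm_sub_le _ _).trans ((add_le_add k1 k2).trans (le_of_eq (by ring)))
    rw [hw, map_smul, norm_smul, Real.norm_eq_abs, abs_of_pos (by positivity)] at k3
    rw [div_mul_eq_mul_div, le_div_iff₀ hR]
    calc ‖G' x v‖ * R = (R / ‖v‖ * ‖G' x v‖) * ‖v‖ := by field_simp
      _ ≤ _ := by gcongr
  rw [le_div_iff₀ hR] at this
  linarith

lemma fp_uniq {r : ℝ} (hr : 0 < r) : UniqueDiffOn ℝ (closedBall (0 : E) r) :=
  uniqueDiffOn_convex (convex_closedBall _ _)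
    ⟨0, mem_interior_iff_mem_nhds.2 (closedBall_mem_nhds _ hr)⟩

lemma fp_hasFDeriv {S : Set E} (hS : UniqueDiffOn ℝ S) {g : E → F}
    (hg : ContDiffOn ℝ (⊤ : ℕ∞) g S) (j : ℕ) {x : E} (hx : x ∈ S) :
    HasFDerivWithinAt (iteratedFDerivWithin ℝ j g S)
      (iteratedFDerivWithin ℝ (j + 1) g S x).curryLeft S x :=
  (hg.ftaylorSeriesWithin hS).fderivWithin j (by exact_mod_cast WithTop.coe_lt_top j) x hx

lemma fp_curryLeft_sub {n : ℕ} (p q : ContinuousMultilinearMap ℝ (fun _ : Fin (n + 1) => E) F) :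
    ‖p.curryLeft - q.curryLeft‖ = ‖p - q‖ := by
  rw [← ContinuousMultilinearMap.curryLeft_norm (p - q)]; rfl

lemma fp_lip {S T : Set E} (hS : UniqueDiffOn ℝ S) {g : E → F}
    (hg : ContDiffOn ℝ (⊤ : ℕ∞) g S) (j : ℕ) (hT : Convex ℝ T) (hTS : T ⊆ S) {c : ℝ}
    (h : ∀ x ∈ T, ‖iteratedFDerivWithin ℝ (j + 1) g S x‖ ≤ c) {x y : E} (hx : x ∈ T)
    (hy : y ∈ T) :
    ‖iteratedFDerivWithin ℝ j g S y - iteratedFDerivWithin ℝ j g S x‖ ≤ c * ‖y - x‖ :=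
  hT.norm_image_sub_le_of_norm_hasFDerivWithin_le
    (fun z hz => (fp_hasFDeriv hS hg j (hTS hz)).mono hTS)
    (fun z hz => by rw [ContinuousMultilinearMap.curryLeft_norm]; exact h z hz) hx hy

lemma fp_landau_iter {r ρ : ℝ} (hρ : 0 < ρ) (hρr : ρ ≤ r) {g : E → F}
    (hg : ContDiffOn ℝ (⊤ : ℕ∞) g (closedBall 0 r)) (j : ℕ) {a c : ℝ}
    (ha : ∀ x ∈ closedBall (0 : E) ρ, ‖iteratedFDerivWithin ℝ j g (closedBall 0 r) x‖ ≤ a)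
    (hc : ∀ x ∈ closedBall (0 : E) ρ, ‖iteratedFDerivWithin ℝ (j + 2) g (closedBall 0 r) x‖ ≤ c)
    {t : ℝ} (ht : 0 < t) (ht1 : t ≤ 1) {x : E} (hx : x ∈ closedBall (0 : E) ρ) :
    ρ * ‖iteratedFDerivWithin ℝ (j + 1) g (closedBall 0 r) x‖
      ≤ 4 * a / t + 8 * ρ ^ 2 * c * t := by
  have hU : UniqueDiffOn ℝ (closedBall (0 : E) r) := fp_uniq (hρ.trans_le hρr)
  have hsub : closedBall (0 : E) ρ ⊆ closedBall 0 r := closedBall_subset_closedBall hρr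
  rw [← ContinuousMultilinearMap.curryLeft_norm]
  refine fp_landau hρ (G := iteratedFDerivWithin ℝ j g (closedBall 0 r))
    (G' := fun x => (iteratedFDerivWithin ℝ (j + 1) g (closedBall 0 r) x).curryLeft)
    ((norm_nonneg _).trans (hc x hx))
    (fun z hz => (fp_hasFDeriv hU hg j (hsub hz)).mono hsub) ?_ ha ht ht1 hx
  intro y hy z hz
  rw [fp_curryLeft_sub]
  exact fp_lip hU hg (j + 1) (convex_closedBall _ _) hsub hc hy hz

/-- weighted Landau inequality -/
lemma fp_landau_weight {r : ℝ} {g : E → F} (hr : 0 < r)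
    (hg : ContDiffOn ℝ (⊤ : ℕ∞) g (closedBall 0 r))
    (j k : ℕ) (h0 : iteratedFDerivWithin ℝ (j + 1) g (closedBall 0 r) 0 = 0) {a c : ℝ}
    (ha0 : 0 ≤ a) (hc0 : 0 ≤ c)
    (ha : ∀ x ∈ closedBall (0 : E) r,
      ‖iteratedFDerivWithin ℝ j g (closedBall 0 r) x‖ ≤ a * ‖x‖ ^ k)
    (hc : ∀ x ∈ closedBall (0 : E) r,
      ‖iteratedFDerivWithin ℝ (j + 2) g (closedBall 0 r) x‖ ≤ c * ‖x‖ ^ k)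
    {h : ℝ} (hh : 0 < h) {x : E} (hx : x ∈ closedBall (0 : E) r) :
    ‖iteratedFDerivWithin ℝ (j + 1) g (closedBall 0 r) x‖
      ≤ (4 * a / h + 8 * c * h) * ‖x‖ ^ k := by
  rcases eq_or_ne x 0 with rfl | hx0
  · rw [h0, norm_zero]; positivity
  have hρ : 0 < ‖x‖ := norm_pos_iff.2 hx0
  have hρr : ‖x‖ ≤ r := mem_closedBall_zero_iff.1 hx
  have hsub : closedBall (0 : E) ‖x‖ ⊆ closedBall 0 r := closedBall_subset_closedBall hρr
  have hxx : x ∈ closedBall (0 : E) ‖x‖ := by simp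
  have hc' : ∀ y ∈ closedBall (0 : E) ‖x‖,
      ‖iteratedFDerivWithin ℝ (j + 2) g (closedBall 0 r) y‖ ≤ c * ‖x‖ ^ k := fun y hy =>
    (hc y (hsub hy)).trans (by
      have := mem_closedBall_zero_iff.1 hy
      gcongr)
  have ha' : ∀ y ∈ closedBall (0 : E) ‖x‖,
      ‖iteratedFDerivWithin ℝ j g (closedBall 0 r) y‖ ≤ a * ‖x‖ ^ k := fun y hy =>
    (ha y (hsub hy)).trans (by
      have := mem_closedBall_zero_iff.1 hy
      gcongr)
  rcases le_total h ‖x‖ with hle | hle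
  · have := fp_landau_iter hρ hρr hg j ha' hc' (t := h / ‖x‖) (by positivity)
      (by rw [div_le_one hρ]; exact hle) hxx
    refine le_of_mul_le_mul_left (this.trans (le_of_eq ?_)) hρ
    field_simp
  · have := fp_lip (fp_uniq hr) hg (j + 1) (convex_closedBall (0 : E) ‖x‖) hsub hc'
      (x := 0) (y := x) (by simp) hxx
    rw [h0, sub_zero, sub_zero] at this
    refine this.trans ?_
    have h1 : 0 ≤ ‖x‖ ^ k := by positivity
    have h2 : c * ‖x‖ ≤ c * h := by gcongr
    have h3 : c * h ≤ 4 * a / h + 8 * c * h := by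
      have : 0 ≤ 4 * a / h := by positivity
      have : 0 ≤ c * h := by positivity
      linarith
    calc c * ‖x‖ ^ k * ‖x‖ = (c * ‖x‖) * ‖x‖ ^ k := by ring
      _ ≤ _ := by gcongr; exact h2.trans h3

lemma fp_maxprinc (n : ℕ) (e : ℕ → ℝ) (he : ∀ j, 0 ≤ e j) (e0 : e 0 ≤ 1) (en : e n ≤ 1)
    (hl : ∀ j, j + 2 ≤ n → e (j + 1) ^ 2 ≤ e j * e (j + 2)) : ∀ j ≤ n, e j ≤ 1 := by
  classical
  obtain ⟨j0, hj0, hmax⟩ := Finset.exists_max_image (Finset.range (n + 1)) e ⟨0, by simp⟩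
  have hex : ∃ j, j ≤ n ∧ e j = e j0 := ⟨j0, by simpa [Nat.lt_succ_iff] using hj0, rfl⟩
  have hmax' : ∀ j ≤ n, e j ≤ e j0 := fun j hj => hmax j (by simp; omega)
  suffices e j0 ≤ 1 from fun j hj => (hmax' j hj).trans this
  by_contra! hM
  obtain ⟨h1, h2⟩ := Nat.find_spec hex
  have h3 := fun j (hj : j < Nat.find hex) => Nat.find_min hex hj
  generalize Nat.find hex = i at h1 h2 h3
  rcases i with _ | i
  · linarith
  have hin : i + 1 ≠ n := by rintro rfl; linarith
  have l1 := hl i (by omega)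
  have l2 : e i < e j0 := lt_of_le_of_ne (hmax' i (by omega))
    (fun h => h3 i (by omega) ⟨by omega, h⟩)
  have l3 := hmax' (i + 2) (by omega)
  have := he i
  have := he (i + 2)
  rw [h2] at l1
  nlinarith

lemma fp_interp {r : ℝ} {g : E → F} (hr : 0 < r)
    (hg : ContDiffOn ℝ (⊤ : ℕ∞) g (closedBall 0 r))
    (h0 : ∀ i : ℕ, iteratedFDerivWithin ℝ i g (closedBall 0 r) 0 = 0) (k b n : ℕ)
    (hbd : ∀ j, ∃ K : ℝ, ∀ x ∈ closedBall (0 : E) r,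
      ‖iteratedFDerivWithin ℝ j g (closedBall 0 r) x‖ ≤ K * ‖x‖ ^ k)
    {a A : ℝ} (ha : 0 < a) (hA : 0 < A)
    (hlow : ∀ x ∈ closedBall (0 : E) r,
      ‖iteratedFDerivWithin ℝ b g (closedBall 0 r) x‖ ≤ a * ‖x‖ ^ k)
    (hhigh : ∀ x ∈ closedBall (0 : E) r,
      ‖iteratedFDerivWithin ℝ (b + n) g (closedBall 0 r) x‖ ≤ a * A ^ n * ‖x‖ ^ k) :
    ∀ j ≤ n, ∀ x ∈ closedBall (0 : E) r,
      ‖iteratedFDerivWithin ℝ (b + j) g (closedBall 0 r) x‖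
        ≤ 12 ^ (n * n) * a * A ^ j * ‖x‖ ^ k := by
  -- optimal constants
  have hopt : ∀ j, ∃ q : ℝ, 0 ≤ q ∧ (∀ x ∈ closedBall (0 : E) r,
      ‖iteratedFDerivWithin ℝ (b + j) g (closedBall 0 r) x‖ ≤ q * ‖x‖ ^ k) ∧
      ∀ K : ℝ, 0 ≤ K → (∀ x ∈ closedBall (0 : E) r,
      ‖iteratedFDerivWithin ℝ (b + j) g (closedBall 0 r) x‖ ≤ K * ‖x‖ ^ k) → q ≤ K := by
    intro j
    obtain ⟨K0, hK0⟩ := hbd (b + j)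
    set s : Set ℝ := {K | 0 ≤ K ∧ ∀ x ∈ closedBall (0 : E) r,
      ‖iteratedFDerivWithin ℝ (b + j) g (closedBall 0 r) x‖ ≤ K * ‖x‖ ^ k} with hs
    have hne : s.Nonempty := ⟨max K0 0, le_max_right _ _, fun x hx => (hK0 x hx).trans (by
      gcongr; exact le_max_left _ _)⟩
    have hbb : BddBelow s := ⟨0, fun K hK => hK.1⟩
    have hcl : IsClosed s := by
      rw [hs]
      simp only [Set.ofPred_and, Set.ofPred_forall]
      refine isClosed_Ici.inter (isClosed_iInter fun x => isClosed_iInter fun hx => ?_)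
      exact isClosed_le continuous_const (by fun_prop)
    have := hcl.csInf_mem hne hbb
    exact ⟨sInf s, this.1, this.2, fun K h1 h2 => csInf_le hbb ⟨h1, h2⟩⟩
  choose q hq0 hq hqmin using hopt
  have hlog : ∀ j, q (j + 1) ^ 2 ≤ 144 * (q j * q (j + 2)) := by
    intro j
    have h1 : ∀ h : ℝ, 0 < h → q (j + 1) ≤ 4 * q j / h + 8 * q (j + 2) * h := by
      intro h hh
      have := hq0 j
      have := hq0 (j + 2)
      refine hqmin (j + 1) _ (by positivity) fun x hx => ?_
      exact fp_landau_weight hr hg (b + j) k (h0 _) (hq0 j) (hq0 (j + 2)) (hq j) (hq (j + 2)) hh hx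
    have h2 := discrim_le_zero (a := 8 * q (j + 2)) (b := - q (j + 1)) (c := 4 * q j) (by
      intro h
      have := hq0 j
      have := hq0 (j + 2)
      have := hq0 (j + 1)
      rcases le_or_gt h 0 with hh | hh
      · have h5 : 0 ≤ q (j + 2) * (h * h) := mul_nonneg (hq0 _) (mul_self_nonneg h)
        have h6 : 0 ≤ q (j + 1) * (-h) := mul_nonneg (hq0 _) (by linarith)
        nlinarith
      · have := h1 h hh
        have h3 : q (j + 1) * h ≤ (4 * q j / h + 8 * q (j + 2) * h) * h := by gcongr
        have h4 : (4 * q j / h + 8 * q (j + 2) * h) * h = 4 * q j + 8 * q (j + 2) * (h * h) := by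
          field_simp
        nlinarith)
    rw [discrim] at h2
    have := mul_nonneg (hq0 j) (hq0 (j + 2))
    nlinarith
  have hmp := fp_maxprinc n (fun j => q j / (a * A ^ j * 12 ^ (j * (n - j))))
    (fun j => by have := hq0 j; positivity)
    (by
      simp only [pow_zero, zero_mul, mul_one]
      rw [div_le_one ha]; exact hqmin 0 a ha.le hlow)
    (by
      simp only [Nat.sub_self, mul_zero, pow_zero, mul_one]
      rw [div_le_one (by positivity)]; exact hqmin n _ (by positivity) hhigh)
    (by
      intro j hj
      obtain ⟨d, rfl⟩ := Nat.exists_eq_add_of_le hj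
      have e1 : j + 2 + d - (j + 1) = d + 1 := by omega
      have e2 : j + 2 + d - j = d + 2 := by omega
      have e3 : j + 2 + d - (j + 2) = d := by omega
      simp only [e1, e2, e3]
      rw [div_pow, div_mul_div_comm, div_le_div_iff₀ (by positivity) (by positivity)]
      have := hlog j
      have e4 : (a * A ^ (j + 1) * 12 ^ ((j + 1) * (d + 1))) ^ 2 =
        144 * (a * A ^ j * 12 ^ (j * (d + 2)) * (a * A ^ (j + 2) * 12 ^ ((j + 2) * d))) := by
        ring
      rw [e4]
      have h5 : 0 ≤ a * A ^ j * 12 ^ (j * (d + 2)) * (a * A ^ (j + 2) * 12 ^ ((j + 2) * d)) := by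
        positivity
      nlinarith [mul_le_mul_of_nonneg_right this h5])
  intro j hj x hx
  have h1 := hmp j hj
  rw [div_le_one (by positivity)] at h1
  refine (hq j x hx).trans ?_
  have h2 : (12 : ℝ) ^ (j * (n - j)) ≤ 12 ^ (n * n) :=
    pow_le_pow_right₀ (by norm_num) (Nat.mul_le_mul hj (Nat.sub_le _ _))
  gcongr
  calc q j ≤ _ := h1
    _ ≤ a * A ^ j * 12 ^ (n * n) := by gcongr
    _ = _ := by ring

/-- flat functions are controlled by every power of the distance to the origin. -/
lemma fp_flat_bdd [FiniteDimensional ℝ E] {r : ℝ} {g : E → F} (hr : 0 < r)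
    (hg : ContDiffOn ℝ (⊤ : ℕ∞) g (closedBall 0 r))
    (h0 : ∀ i : ℕ, iteratedFDerivWithin ℝ i g (closedBall 0 r) 0 = 0) (k : ℕ) :
    ∀ j, ∃ K : ℝ, 0 ≤ K ∧ ∀ x ∈ closedBall (0 : E) r,
      ‖iteratedFDerivWithin ℝ j g (closedBall 0 r) x‖ ≤ K * ‖x‖ ^ k := by
  have := FiniteDimensional.proper_real E
  induction k with
  | zero =>
    intro j
    obtain ⟨K, hK⟩ := (isCompact_closedBall (0 : E) r).exists_bound_of_continuousOn
      (hg.continuousOn_iteratedFDerivWithin (m := j) (by exact_mod_cast le_top) (fp_uniq hr))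
    exact ⟨K, (norm_nonneg _).trans (hK 0 (by simp [hr.le])), by simpa using hK⟩
  | succ k ih =>
    intro j
    obtain ⟨K, hK0, hK⟩ := ih (j + 1)
    refine ⟨K, hK0, fun x hx => ?_⟩
    have hρr : ‖x‖ ≤ r := mem_closedBall_zero_iff.1 hx
    have hsub : closedBall (0 : E) ‖x‖ ⊆ closedBall 0 r := closedBall_subset_closedBall hρr
    have hc' : ∀ y ∈ closedBall (0 : E) ‖x‖,
        ‖iteratedFDerivWithin ℝ (j + 1) g (closedBall 0 r) y‖ ≤ K * ‖x‖ ^ k := fun y hy =>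
      (hK y (hsub hy)).trans (by
        have := mem_closedBall_zero_iff.1 hy
        gcongr)
    have := fp_lip (fp_uniq hr) hg j (convex_closedBall (0 : E) ‖x‖) hsub hc'
      (x := 0) (y := x) (by simp) (by simp)
    rw [h0, sub_zero, sub_zero] at this
    refine this.trans (le_of_eq (by ring))

end Interp


section Comp

variable {E F : Type*} [NormedAddCommGroup E] [NormedSpace ℝ E]
  [NormedAddCommGroup F] [NormedSpace ℝ F]

lemma fp_sub_const {S : Set E} (hS : UniqueDiffOn ℝ S) {g : E → F}
    (hg : ContDiffOn ℝ (⊤ : ℕ∞) g S) {n : ℕ} (hn : 1 ≤ n) (v : F) {x : E} (hx : x ∈ S) :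
    iteratedFDerivWithin ℝ n (fun y => g y - v) S x = iteratedFDerivWithin ℝ n g S x := by
  have h1 := iteratedFDerivWithin_sub_apply (𝕜 := ℝ) (i := n) (f := g) (g := fun _ => v)
    ((hg x hx).of_le (by exact_mod_cast le_top)) contDiffWithinAt_const hS hx
  rw [iteratedFDerivWithin_const_of_ne (by omega)] at h1
  rw [show (fun y => g y - v) = g - fun _ => v from rfl, h1]
  simp

lemma fp_comp {S : Set E} {T : Set E} (hS : UniqueDiffOn ℝ S) (hT : UniqueDiffOn ℝ T)
    {g : E → F} {f : E → E} (hg : ContDiffOn ℝ (⊤ : ℕ∞) g T) (hf : ContDiffOn ℝ (⊤ : ℕ∞) f S)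
    (hst : MapsTo f S T) {x : E} (hx : x ∈ S) {n : ℕ} (hn : 1 ≤ n) {K A D : ℝ}
    (hK : 0 ≤ K) (hA : 0 < A)
    (hC : ∀ j, 1 ≤ j → j ≤ n → ‖iteratedFDerivWithin ℝ j g T (f x)‖ ≤ K * A ^ j)
    (hD : ∀ i, 1 ≤ i → i ≤ n → A * ‖iteratedFDerivWithin ℝ i f S x‖ ≤ D ^ i) :
    ‖iteratedFDerivWithin ℝ n (fun y => g (f y)) S x‖ ≤ (n.factorial : ℝ) * K * D ^ n := by
  set L : E ≃L[ℝ] E := ContinuousLinearEquiv.smulLeft (Units.mk0 A⁻¹ (by positivity)) with hL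
  have hLa : ∀ z, L z = A⁻¹ • z := fun z => rfl
  have hLn : ‖(L : E →L[ℝ] E)‖ ≤ A⁻¹ := by
    refine ContinuousLinearMap.opNorm_le_bound _ (by positivity) fun z => ?_
    change ‖A⁻¹ • z‖ ≤ _
    rw [norm_smul, Real.norm_eq_abs, abs_of_pos (by positivity)]
  set v := g (f x) with hv
  set g1 : E → F := fun y => g y - v with hg1
  have hg1c : ContDiffOn ℝ (⊤ : ℕ∞) g1 T := hg.sub contDiffOn_const
  have hinv : ∀ y, L (A • f y) = f y := fun y => by
    rw [hLa, smul_smul, inv_mul_cancel₀ hA.ne', one_smul]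
  have main := norm_iteratedFDerivWithin_comp_le (𝕜 := ℝ) (g := g1 ∘ L) (f := A • f) (n := n)
    (s := S) (t := L ⁻¹' T) (x := x) (N := (⊤ : ℕ∞))
    (hg1c.comp L.contDiff.contDiffOn (fun z hz => hz)) (hf.const_smul A)
    (by exact_mod_cast le_top) (L.uniqueDiffOn_preimage_iff.2 hT) hS
    (fun y hy => by
      rw [mem_preimage]
      change L (A • f y) ∈ T
      rw [hinv]; exact hst hy) hx (C := K) (D := D)
    (fun i hi => by
      have hmem : L ((A • f) x) ∈ T := by
        change L (A • f x) ∈ T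
        rw [hinv]; exact hst hx
      rw [L.iteratedFDerivWithin_comp_right g1 hT hmem]
      rcases Nat.eq_zero_or_pos i with rfl | hi0
      · refine (ContinuousMultilinearMap.norm_compContinuousLinearMap_le _ _).trans ?_
        have : L ((A • f) x) = f x := hinv x
        rw [this]
        simp [hg1, hv, hK]
      refine (ContinuousMultilinearMap.norm_compContinuousLinearMap_le _ _).trans ?_
      have : L ((A • f) x) = f x := hinv x
      rw [this, fp_sub_const hT hg hi0 v (hst hx)]
      rw [Finset.prod_const, Finset.card_univ, Fintype.card_fin]
      calc _ ≤ (K * A ^ i) * (A⁻¹) ^ i := by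
            gcongr
            exact hC i hi0 hi
        _ = K := by rw [mul_assoc, ← mul_pow, mul_inv_cancel₀ hA.ne', one_pow, mul_one])
    (fun i hi1 hi => by
      rw [iteratedFDerivWithin_const_smul_apply ((hf x hx).of_le (by exact_mod_cast le_top)) hS hx,
        norm_smul, Real.norm_eq_abs, abs_of_pos hA]
      exact hD i hi1 hi)
  have e : ((g1 ∘ L) ∘ (A • f)) = fun y => g (f y) - v := by
    funext y
    change g (L (A • f y)) - v = _
    rw [hinv]
  rw [e, fp_sub_const hS (g := fun y => g (f y)) (hg.comp hf hst) hn v hx] at main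
  exact main

lemma fp_id_bound {S : Set E} (hS : UniqueDiffOn ℝ S) {x : E} (hx : x ∈ S) (i : ℕ) :
    ‖iteratedFDerivWithin ℝ (i + 1) (fun y : E => y) S x‖ ≤ 1 := by
  rw [← norm_iteratedFDerivWithin_fderivWithin hS hx]
  have h1 : EqOn (fderivWithin ℝ (fun y : E => y) S) (fun _ => ContinuousLinearMap.id ℝ E) S :=
    fun y hy => fderivWithin_fun_id (hS y hy)
  rw [iteratedFDerivWithin_congr h1 hx]
  rcases Nat.eq_zero_or_pos i with rfl | hi
  · simpa using ContinuousLinearMap.norm_id_le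
  · rw [iteratedFDerivWithin_const_of_ne (by omega)]; simp

/-- Euler iterates of a vector field with step `1/N`. -/
noncomputable def fpEuler (Y : E → E) (N : ℕ) : ℕ → E → E
  | 0 => fun x => x
  | q + 1 => fun x => fpEuler Y N q x + (N : ℝ)⁻¹ • Y (fpEuler Y N q x)

lemma fp_euler_norm {r s b : ℝ} {Y : E → E} (hb : 0 ≤ b) (hsb : s + b ≤ r)
    (hY : ∀ x ∈ closedBall (0 : E) r, ‖Y x‖ ≤ b) {N : ℕ} (hN : 1 ≤ N) :
    ∀ q ≤ N, ∀ x ∈ closedBall (0 : E) s, ‖fpEuler Y N q x‖ ≤ s + q * ((N : ℝ)⁻¹ * b) ∧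
      fpEuler Y N q x ∈ closedBall (0 : E) r := by
  have hN' : (0 : ℝ) < N := by exact_mod_cast hN
  have aux : ∀ q ≤ N, s + q * ((N : ℝ)⁻¹ * b) ≤ r := fun q hq => by
    have : (q : ℝ) * ((N : ℝ)⁻¹ * b) ≤ b := by
      rw [← mul_assoc]
      refine mul_le_of_le_one_left hb ?_
      rw [← div_eq_mul_inv, div_le_one hN']; exact_mod_cast hq
    linarith
  intro q
  induction q with
  | zero =>
    intro hq x hx
    have := mem_closedBall_zero_iff.1 hx
    refine ⟨by simpa [fpEuler] using this, ?_⟩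
    rw [mem_closedBall_zero_iff]
    change ‖x‖ ≤ r
    linarith
  | succ q ih =>
    intro hq x hx
    obtain ⟨h1, h2⟩ := ih (by omega) x hx
    have h3 : ‖fpEuler Y N (q + 1) x‖ ≤ s + (q + 1 : ℕ) * ((N : ℝ)⁻¹ * b) := by
      refine (norm_add_le _ _).trans ?_
      rw [norm_smul, Real.norm_eq_abs, abs_of_pos (by positivity)]
      have : (N : ℝ)⁻¹ * ‖Y (fpEuler Y N q x)‖ ≤ (N : ℝ)⁻¹ * b := by
        gcongr; exact hY _ h2
      push_cast
      linarith
    exact ⟨h3, mem_closedBall_zero_iff.2 (h3.trans (aux _ hq))⟩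

lemma fp_euler_contDiff {r s b : ℝ} {Y : E → E} (hb : 0 ≤ b) (hsb : s + b ≤ r)
    (hY : ∀ x ∈ closedBall (0 : E) r, ‖Y x‖ ≤ b)
    (hYc : ContDiffOn ℝ (⊤ : ℕ∞) Y (closedBall 0 r)) {N : ℕ} (hN : 1 ≤ N) :
    ∀ q ≤ N, ContDiffOn ℝ (⊤ : ℕ∞) (fpEuler Y N q) (closedBall 0 s) := by
  intro q
  induction q with
  | zero => intro _; exact contDiffOn_id
  | succ q ih =>
    intro hq
    have h1 := ih (by omega)
    have h2 : ContDiffOn ℝ (⊤ : ℕ∞) (fun x => Y (fpEuler Y N q x)) (closedBall 0 s) :=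
      hYc.comp h1 (fun x hx => (fp_euler_norm hb hsb hY hN q (by omega) x hx).2)
    exact h1.add (h2.const_smul _)

variable (E) in
lemma fp_euler_bound (K : ℝ) (hK : 0 ≤ K) (n : ℕ) : ∃ c : ℝ, 1 ≤ c ∧
    ∀ (r s b L : ℝ) (Y : E → E), 0 < s → 0 ≤ b → s + b ≤ r →
      (∀ x ∈ closedBall (0 : E) r, ‖Y x‖ ≤ b) →
      ContDiffOn ℝ (⊤ : ℕ∞) Y (closedBall 0 r) → 1 ≤ L →
      (∀ j, j + 1 ≤ n → ∀ y ∈ closedBall (0 : E) r,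
        ‖iteratedFDerivWithin ℝ (j + 1) Y (closedBall 0 r) y‖ ≤ K * L ^ j) →
      ∀ N : ℕ, 1 ≤ N → ∀ q ≤ N, ∀ x ∈ closedBall (0 : E) s, ∀ i, i + 1 ≤ n →
        ‖iteratedFDerivWithin ℝ (i + 1) (fpEuler Y N q) (closedBall 0 s) x‖ ≤ c * L ^ i := by
  induction n with
  | zero => exact ⟨1, le_rfl, fun _ _ _ _ _ _ _ _ _ _ _ _ _ _ _ _ _ _ i hi => by omega⟩
  | succ n ih =>
    obtain ⟨c, hc1, hc⟩ := ih
    set M : ℝ := ((n + 1).factorial : ℝ) * K * c ^ (n + 1) with hM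
    have hM0 : 0 ≤ M := by positivity
    refine ⟨max c (2 * Real.exp M), le_max_of_le_left hc1, ?_⟩
    intro r s b L Y hs hb hsb hYb hYc hL hYd N hN q hq x hx i hi
    have hr : 0 < r := by linarith
    have hL0 : 0 < L := by linarith
    have hN' : (0 : ℝ) < N := by exact_mod_cast hN
    have hUs : UniqueDiffOn ℝ (closedBall (0 : E) s) := fp_uniq hs
    have hlow : ∀ q ≤ N, ∀ i, i + 1 ≤ n →
        ‖iteratedFDerivWithin ℝ (i + 1) (fpEuler Y N q) (closedBall 0 s) x‖ ≤ c * L ^ i :=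
      fun q hq i hi => hc r s b L Y hs hb hsb hYb hYc hL (fun j hj => hYd j (by omega)) N hN q hq x
        hx i hi
    rcases Nat.lt_or_ge i n with hin | hin
    · exact (hlow q hq i hin).trans (by gcongr; exact le_max_left _ _)
    obtain rfl : i = n := by omega
    have hcd := fp_euler_contDiff hb hsb hYb hYc hN
    have hmaps := fp_euler_norm hb hsb hYb hN
    have claim : ∀ q ≤ N, L ^ i +
        ‖iteratedFDerivWithin ℝ (i + 1) (fpEuler Y N q) (closedBall 0 s) x‖
        ≤ (1 + (N : ℝ)⁻¹ * M) ^ q * (2 * L ^ i) := by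
      intro q
      induction q with
      | zero =>
        intro _
        have h1 := fp_id_bound hUs hx i
        have h2 : (1 : ℝ) ≤ L ^ i := one_le_pow₀ hL
        change L ^ i + ‖iteratedFDerivWithin ℝ (i + 1) (fun y : E => y) (closedBall 0 s) x‖ ≤ _
        rw [pow_zero]
        linarith
      | succ q ihq =>
        intro hq
        have hq' : q ≤ N := by omega
        have h1 := ihq hq'
        set u := ‖iteratedFDerivWithin ℝ (i + 1) (fpEuler Y N q) (closedBall 0 s) x‖ with hu
        have hu0 : 0 ≤ u := norm_nonneg _
        have hmq : MapsTo (fpEuler Y N q) (closedBall 0 s) (closedBall 0 r) :=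
          fun y hy => (hmaps q hq' y hy).2
        set D : ℝ := max (c * L) ((L * u) ^ (((i + 1 : ℕ) : ℝ)⁻¹)) with hD
        have hpow : ((L * u) ^ (((i + 1 : ℕ) : ℝ)⁻¹)) ^ (i + 1) = L * u :=
          Real.rpow_inv_natCast_pow (by positivity) (by omega)
        have hcL : c * L ≤ D := le_max_left _ _
        have hcL0 : 0 ≤ c * L := by positivity
        have hDle : D ^ (i + 1) ≤ (c * L) ^ (i + 1) + L * u := by
          rcases max_choice (c * L) ((L * u) ^ (((i + 1 : ℕ) : ℝ)⁻¹)) with h | h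
          · rw [hD, h]; have : 0 ≤ L * u := by positivity
            linarith
          · rw [hD, h, hpow]
            have : 0 ≤ (c * L) ^ (i + 1) := by positivity
            linarith
        have hDge : L * u ≤ D ^ (i + 1) := by
          rw [← hpow]
          exact pow_le_pow_left₀ (by positivity) (le_max_right _ _) _
        have h2 := fp_comp hUs (fp_uniq hr) hYc (hcd q hq') hmq hx (n := i + 1) (by omega)
          (K := K / L) (A := L) (D := D) (by positivity) hL0
          (fun j hj1 hj => by
            obtain ⟨j, rfl⟩ := Nat.exists_eq_add_of_le' hj1
            refine (hYd j hj _ (hmq hx)).trans (le_of_eq ?_)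
            field_simp
            ring)
          (fun j hj1 hj => by
            obtain ⟨j, rfl⟩ := Nat.exists_eq_add_of_le' hj1
            rcases Nat.lt_or_ge j i with hji | hji
            · calc _ ≤ L * (c * L ^ j) := by gcongr; exact hlow q hq' j hji
                _ = c * L ^ (j + 1) := by ring
                _ ≤ c ^ (j + 1) * L ^ (j + 1) := by
                    gcongr; exact le_self_pow₀ hc1 (by omega)
                _ = (c * L) ^ (j + 1) := by ring
                _ ≤ D ^ (j + 1) := by gcongr
            · obtain rfl : j = i := by omega
              exact hDge)
        have h3 : ‖iteratedFDerivWithin ℝ (i + 1) (fun y => Y (fpEuler Y N q y))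
            (closedBall 0 s) x‖ ≤ M * (L ^ i + u) := by
          refine h2.trans ?_
          calc _ ≤ ((i + 1).factorial : ℝ) * (K / L) * ((c * L) ^ (i + 1) + L * u) := by gcongr
            _ = ((i + 1).factorial : ℝ) * K * (c ^ (i + 1) * L ^ i + 1 * u) := by
              field_simp; ring
            _ ≤ ((i + 1).factorial : ℝ) * K * (c ^ (i + 1) * L ^ i + c ^ (i + 1) * u) := by
              gcongr; exact one_le_pow₀ hc1
            _ = _ := by rw [hM]; ring
        have hcomp : ContDiffOn ℝ (⊤ : ℕ∞) (fun y => Y (fpEuler Y N q y)) (closedBall 0 s) :=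
          hYc.comp (hcd q hq') hmq
        have h4 : iteratedFDerivWithin ℝ (i + 1) (fpEuler Y N (q + 1)) (closedBall 0 s) x =
            iteratedFDerivWithin ℝ (i + 1) (fpEuler Y N q) (closedBall 0 s) x + (N : ℝ)⁻¹ •
            iteratedFDerivWithin ℝ (i + 1) (fun y => Y (fpEuler Y N q y)) (closedBall 0 s) x := by
          rw [← iteratedFDerivWithin_const_smul_apply
            ((hcomp x hx).of_le (by exact_mod_cast le_top)) hUs hx,
            ← iteratedFDerivWithin_add_apply (g := (N : ℝ)⁻¹ • fun y => Y (fpEuler Y N q y)) (((hcd q hq') x hx).of_le (by exact_mod_cast le_top))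
              (((hcomp x hx).const_smul _).of_le (by exact_mod_cast le_top)) hUs hx]
          rfl
        rw [h4]
        have h5 := norm_add_le (iteratedFDerivWithin ℝ (i + 1) (fpEuler Y N q) (closedBall 0 s) x)
          ((N : ℝ)⁻¹ •
            iteratedFDerivWithin ℝ (i + 1) (fun y => Y (fpEuler Y N q y)) (closedBall 0 s) x)
        rw [norm_smul, Real.norm_eq_abs, abs_of_pos (by positivity : (0:ℝ) < (N : ℝ)⁻¹)] at h5
        have h6 : (N : ℝ)⁻¹ * ‖iteratedFDerivWithin ℝ (i + 1) (fun y => Y (fpEuler Y N q y))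
            (closedBall 0 s) x‖ ≤ (N : ℝ)⁻¹ * (M * (L ^ i + u)) := by gcongr
        calc _ ≤ (1 + (N : ℝ)⁻¹ * M) * (L ^ i + u) := by linarith
          _ ≤ (1 + (N : ℝ)⁻¹ * M) * ((1 + (N : ℝ)⁻¹ * M) ^ q * (2 * L ^ i)) := by gcongr
          _ = _ := by ring
    have h1 := claim q hq
    have h2 : (1 + (N : ℝ)⁻¹ * M) ^ q ≤ Real.exp M := by
      calc (1 + (N : ℝ)⁻¹ * M) ^ q ≤ (1 + (N : ℝ)⁻¹ * M) ^ N :=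
            pow_le_pow_right₀ (by have : 0 ≤ (N : ℝ)⁻¹ * M := by positivity
                                  linarith) hq
        _ ≤ (Real.exp ((N : ℝ)⁻¹ * M)) ^ N := by
            gcongr; rw [add_comm]; exact Real.add_one_le_exp _
        _ = Real.exp M := by rw [← Real.exp_nat_mul]; congr 1; field_simp
    have hLi : 0 ≤ L ^ i := by positivity
    calc _ ≤ (1 + (N : ℝ)⁻¹ * M) ^ q * (2 * L ^ i) := by linarith
      _ ≤ Real.exp M * (2 * L ^ i) := by gcongr
      _ = (2 * Real.exp M) * L ^ i := by ring
      _ ≤ _ := by gcongr; exact le_max_right _ _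

end Comp


section Limit

variable {E F : Type*} [NormedAddCommGroup E] [NormedSpace ℝ E]
  [NormedAddCommGroup F] [NormedSpace ℝ F]

lemma fp_euler_conv {r s b : ℝ} {Y : E → E} (hb : 0 ≤ b) (hsb : s + b ≤ r)
    (hYb : ∀ x ∈ closedBall (0 : E) r, ‖Y x‖ ≤ b)
    (hYl : ∀ x ∈ closedBall (0 : E) r, ∀ y ∈ closedBall (0 : E) r, ‖Y y - Y x‖ ≤ ‖y - x‖)
    {ψ : ℝ → E → E} (h0 : ∀ x ∈ closedBall (0 : E) s, ψ 0 x = x)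
    (hψ : ∀ t ∈ Set.Icc (0 : ℝ) 1, ∀ x ∈ closedBall (0 : E) s,
      ψ t x ∈ ball (0 : E) r ∧
      HasDerivWithinAt (fun τ => ψ τ x) (Y (ψ t x)) (Set.Icc 0 1) t)
    {N : ℕ} (hN : 1 ≤ N) {x : E} (hx : x ∈ closedBall (0 : E) s) :
    ‖fpEuler Y N N x - ψ 1 x‖ ≤ Real.exp 1 * b * (N : ℝ)⁻¹ := by
  have hN' : (0 : ℝ) < N := by exact_mod_cast hN
  set h : ℝ := (N : ℝ)⁻¹ with hh
  have hh0 : 0 < h := by positivity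
  have hNh : (N : ℝ) * h = 1 := by rw [hh]; field_simp
  have hmem : ∀ t ∈ Set.Icc (0 : ℝ) 1, ψ t x ∈ closedBall (0 : E) r := fun t ht =>
    ball_subset_closedBall (hψ t ht x hx).1
  have claim : ∀ q : ℕ, q ≤ N →
      ‖fpEuler Y N q x - ψ (q * h) x‖ ≤ (1 + h) ^ q * (q * (b * h * h)) := by
    intro q
    induction q with
    | zero =>
      intro _
      simp [fpEuler, h0 x hx]
    | succ q ih =>
      intro hq
      have h1 := ih (by omega)
      have hqN : ((q : ℝ) + 1) ≤ N := by exact_mod_cast hq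
      have ht1 : ((q : ℝ) + 1) * h ≤ 1 := by
        calc ((q : ℝ) + 1) * h ≤ N * h := by gcongr
          _ = 1 := hNh
      have hsub : Icc ((q : ℝ) * h) (((q : ℝ) + 1) * h) ⊆ Icc 0 1 := by
        apply Icc_subset_Icc (by positivity) ht1
      have hle : (q : ℝ) * h ≤ ((q : ℝ) + 1) * h := by gcongr; linarith
      have hl : (q : ℝ) * h ∈ Icc ((q : ℝ) * h) (((q : ℝ) + 1) * h) := ⟨le_rfl, hle⟩
      have hrr : ((q : ℝ) + 1) * h ∈ Icc ((q : ℝ) * h) (((q : ℝ) + 1) * h) := ⟨hle, le_rfl⟩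
      set z := ψ (q * h) x with hz
      have hzm : z ∈ closedBall (0 : E) r := hmem _ (hsub hl)
      have hd : ∀ τ ∈ Icc ((q : ℝ) * h) (((q : ℝ) + 1) * h),
          HasDerivWithinAt (fun τ => ψ τ x) (Y (ψ τ x)) (Icc ((q : ℝ) * h) (((q : ℝ) + 1) * h)) τ :=
        fun τ hτ => (hψ τ (hsub hτ) x hx).2.mono hsub
      have h2 := norm_image_sub_le_of_norm_deriv_le_segment' hd
        (fun τ hτ => hYb _ (hmem τ (hsub (Ico_subset_Icc_self hτ))))
      have h3 := norm_image_sub_le_of_norm_deriv_le_segment' (C := b * h)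
        (f := fun τ => ψ τ x - τ • Y z) (f' := fun τ => Y (ψ τ x) - (1 : ℝ) • Y z)
        (fun τ hτ => (hd τ hτ).sub ((hasDerivAt_id τ).hasDerivWithinAt.smul_const (Y z)))
        (fun τ hτ => by
          have hτ' := Ico_subset_Icc_self hτ
          rw [one_smul]
          refine (hYl _ hzm _ (hmem τ (hsub hτ'))).trans ((h2 τ hτ').trans ?_)
          gcongr
          have := hτ'.2
          linarith) _ hrr
      have e1 : ((q : ℝ) + 1) * h - q * h = h := by ring
      rw [e1] at h3
      have e2 : ψ (((q : ℝ) + 1) * h) x - (((q : ℝ) + 1) * h) • Y z -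
          (ψ (q * h) x - ((q : ℝ) * h) • Y z) = ψ (((q : ℝ) + 1) * h) x - z - h • Y z := by
        rw [← hz]
        have : (((q : ℝ) + 1) * h) • Y z = ((q : ℝ) * h) • Y z + h • Y z := by
          rw [← add_smul]; congr 1; ring
        rw [this]; abel
      simp only [e2] at h3
      have hφm : fpEuler Y N q x ∈ closedBall (0 : E) r :=
        (fp_euler_norm hb hsb hYb hN q (by omega) x hx).2
      have h4 := hYl _ hzm _ hφm
      have e3 : fpEuler Y N (q + 1) x - ψ (((q : ℝ) + 1) * h) x =
          (fpEuler Y N q x - z) + h • (Y (fpEuler Y N q x) - Y z) -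
          (ψ (((q : ℝ) + 1) * h) x - z - h • Y z) := by
        change fpEuler Y N q x + h • Y (fpEuler Y N q x) - _ = _
        rw [smul_sub]; abel
      push_cast
      rw [e3]
      refine (norm_sub_le _ _).trans ?_
      have h5 := norm_add_le (fpEuler Y N q x - z) (h • (Y (fpEuler Y N q x) - Y z))
      rw [norm_smul, Real.norm_eq_abs, abs_of_pos hh0] at h5
      have h6 : h * ‖Y (fpEuler Y N q x) - Y z‖ ≤ h * ‖fpEuler Y N q x - z‖ := by gcongr
      have h7 : (1 : ℝ) ≤ (1 + h) ^ (q + 1) := one_le_pow₀ (by linarith)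
      have h8 : 0 ≤ b * h * h := by positivity
      calc _ ≤ (1 + h) * ‖fpEuler Y N q x - z‖ + b * h * h := by linarith
        _ ≤ (1 + h) * ((1 + h) ^ q * (q * (b * h * h))) + (1 + h) ^ (q + 1) * (b * h * h) := by
          exact add_le_add (by gcongr) (le_mul_of_one_le_left h8 h7)
        _ = _ := by ring
  have h1 := claim N le_rfl
  rw [hNh] at h1
  have h2 : (1 + h) ^ N ≤ Real.exp 1 := by
    calc (1 + h) ^ N ≤ (Real.exp h) ^ N := by
          gcongr; rw [add_comm]; exact Real.add_one_le_exp _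
      _ = Real.exp 1 := by rw [← Real.exp_nat_mul, hNh]
  calc _ ≤ _ := h1
    _ = (1 + h) ^ N * ((N * h) * b * h) := by ring
    _ = (1 + h) ^ N * (b * h) := by rw [hNh, one_mul]
    _ ≤ Real.exp 1 * (b * h) := by gcongr
    _ = _ := by ring

open Filter Topology in
lemma fp_limit [CompleteSpace F] {s : ℝ} (hs : 0 < s) {φ : ℕ → E → F} {f : E → F}
    (hφ : ∀ N, ContDiffOn ℝ (⊤ : ℕ∞) (φ N) (closedBall 0 s))
    (hbd : ∀ i, ∃ U : ℝ, ∀ N, ∀ x ∈ closedBall (0 : E) s,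
      ‖iteratedFDerivWithin ℝ (i + 1) (φ N) (closedBall 0 s) x‖ ≤ U)
    (hlim : ∀ ε > (0 : ℝ), ∃ N0, ∀ N ≥ N0, ∀ x ∈ closedBall (0 : E) s, ‖φ N x - f x‖ ≤ ε) :
    ContDiffOn ℝ (⊤ : ℕ∞) f (closedBall 0 s) ∧ ∀ i, ∀ x ∈ closedBall (0 : E) s,
      Tendsto (fun N => iteratedFDerivWithin ℝ i (φ N) (closedBall 0 s) x) atTop
        (𝓝 (iteratedFDerivWithin ℝ i f (closedBall 0 s) x)) := by
  have hU : UniqueDiffOn ℝ (closedBall (0 : E) s) := fp_uniq hs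
  have hsub : ∀ i N M, ∀ x ∈ closedBall (0 : E) s,
      iteratedFDerivWithin ℝ i (φ N - φ M) (closedBall 0 s) x =
      iteratedFDerivWithin ℝ i (φ N) (closedBall 0 s) x -
      iteratedFDerivWithin ℝ i (φ M) (closedBall 0 s) x := fun i N M x hx =>
    iteratedFDerivWithin_sub_apply ((hφ N x hx).of_le (by exact_mod_cast le_top))
      ((hφ M x hx).of_le (by exact_mod_cast le_top)) hU hx
  have hcau : ∀ i, ∀ ε > (0 : ℝ), ∃ N0, ∀ N ≥ N0, ∀ M ≥ N0, ∀ x ∈ closedBall (0 : E) s,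
      ‖iteratedFDerivWithin ℝ i (φ N - φ M) (closedBall 0 s) x‖ ≤ ε := by
    intro i
    induction i with
    | zero =>
      intro ε hε
      obtain ⟨N0, h0⟩ := hlim (ε / 2) (by positivity)
      refine ⟨N0, fun N hN M hM x hx => ?_⟩
      rw [norm_iteratedFDerivWithin_zero]
      have h1 := h0 N hN x hx
      have h2 := h0 M hM x hx
      have e : (φ N - φ M) x = (φ N x - f x) - (φ M x - f x) := by simp
      rw [e]
      exact (norm_sub_le _ _).trans (by linarith)
    | succ i ih =>
      intro ε hε
      obtain ⟨U0, hU0⟩ := hbd (i + 1)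
      set U := max U0 0 with hUd
      have hUn : 0 ≤ U := le_max_right _ _
      set t : ℝ := min 1 (ε / (32 * s * (U + 1))) with htd
      have ht : 0 < t := lt_min one_pos (by positivity)
      have ht1 : t ≤ 1 := min_le_left _ _
      have ht2 : t * (32 * s * (U + 1)) ≤ ε := by
        rw [← le_div_iff₀ (by positivity)]; exact min_le_right _ _
      obtain ⟨N0, h0⟩ := ih (s * ε * t / 8) (by positivity)
      refine ⟨N0, fun N hN M hM x hx => ?_⟩
      have h1 := fp_landau_iter hs le_rfl ((hφ N).sub (hφ M)) i (c := 2 * U)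
        (h0 N hN M hM) (fun y hy => by
          refine le_trans (le_of_eq (congrArg norm (hsub (i + 2) N M y hy))) ?_
          refine (norm_sub_le _ _).trans ?_
          have k1 := (hU0 N y hy).trans (le_max_left U0 0)
          have k2 := (hU0 M y hy).trans (le_max_left U0 0)
          linarith) ht ht1 hx
      refine le_of_mul_le_mul_left (h1.trans ?_) hs
      have e1 : 4 * (s * ε * t / 8) / t = s * ε / 2 := by field_simp; ring
      rw [e1]
      have e2 : t * (32 * s * U) ≤ ε := by
        refine le_trans ?_ ht2
        gcongr; linarith
      have e3 := mul_le_mul_of_nonneg_left e2 hs.le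
      nlinarith
  have hex : ∀ x i, ∃ p : ContinuousMultilinearMap ℝ (fun _ : Fin i => E) F,
      x ∈ closedBall (0 : E) s →
      Tendsto (fun N => iteratedFDerivWithin ℝ i (φ N) (closedBall 0 s) x) atTop (𝓝 p) := by
    intro x i
    by_cases hx : x ∈ closedBall (0 : E) s
    · have : CauchySeq (fun N => iteratedFDerivWithin ℝ i (φ N) (closedBall 0 s) x) := by
        refine Metric.cauchySeq_iff.2 fun ε hε => ?_
        obtain ⟨N0, h0⟩ := hcau i (ε / 2) (by positivity)
        refine ⟨N0, fun N hN M hM => ?_⟩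
        rw [dist_eq_norm, ← hsub i N M x hx]
        exact (h0 N hN M hM x hx).trans_lt (by linarith)
      obtain ⟨p, hp⟩ := cauchySeq_tendsto_of_complete this
      exact ⟨p, fun _ => hp⟩
    · exact ⟨0, fun h => absurd h hx⟩
  choose P hP using hex
  have hder : ∀ i, ∀ x ∈ closedBall (0 : E) s,
      HasFDerivWithinAt (fun y => P y i) (P x (i + 1)).curryLeft (closedBall 0 s) x := by
    intro i x hx
    obtain ⟨U0, hU0⟩ := hbd (i + 1)
    have hUn : 0 ≤ U0 := (norm_nonneg _).trans (hU0 0 x hx)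
    have hq : ∀ y ∈ closedBall (0 : E) s,
        ‖P y i - P x i - (P x (i + 1)).curryLeft (y - x)‖ ≤ U0 * ‖y - x‖ ^ 2 := by
      intro y hy
      have hc : Tendsto (fun N => (iteratedFDerivWithin ℝ (i + 1) (φ N) (closedBall 0 s) x).curryLeft)
          atTop (𝓝 (P x (i + 1)).curryLeft) :=
        ((continuousMultilinearCurryLeftEquiv ℝ (fun _ : Fin (i + 1) => E) F).continuous.tendsto
          _).comp (hP x (i + 1) hx)
      have hc2 := ((ContinuousLinearMap.apply ℝ (ContinuousMultilinearMap ℝ (fun _ : Fin i => E) F)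
        (y - x)).continuous.tendsto _).comp hc
      refine le_of_tendsto ((((hP y i hy).sub (hP x i hx)).sub hc2).norm)
        (Eventually.of_forall fun N => ?_)
      exact fp_taylor2 (convex_closedBall (0 : E) s) hUn
        (G' := fun z => (iteratedFDerivWithin ℝ (i + 1) (φ N) (closedBall 0 s) z).curryLeft)
        (fun z hz => fp_hasFDeriv hU (hφ N) i hz)
        (fun z hz w hw => by
          rw [fp_curryLeft_sub]
          exact fp_lip hU (hφ N) (i + 1) (convex_closedBall _ _) subset_rfl (hU0 N) hz hw) hx hy
    have h0 : HasFDerivWithinAt (fun y => P y i - P x i - (P x (i + 1)).curryLeft (y - x))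
        (0 : E →L[ℝ] _) (closedBall 0 s) x := by
      refine Asymptotics.IsBigO.hasFDerivWithinAt (n := 2) ?_ hx (by norm_num)
      refine Asymptotics.IsBigO.of_bound U0 ?_
      filter_upwards [self_mem_nhdsWithin] with y hy
      rw [norm_pow, norm_norm]
      exact hq y hy
    have h1 : HasFDerivWithinAt (fun y => (P x (i + 1)).curryLeft (y - x))
        (P x (i + 1)).curryLeft (closedBall 0 s) x := by
      have := (P x (i + 1)).curryLeft.hasFDerivWithinAt (s := closedBall 0 s) (x := x)
      simpa [map_sub] using this.sub_const ((P x (i + 1)).curryLeft x)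
    have h2 := (h0.add h1).add_const (P x i)
    rw [zero_add] at h2
    refine h2.congr_of_eventuallyEq (Eventually.of_forall fun y => ?_) ?_ <;> simp
  have hT : HasFTaylorSeriesUpToOn (⊤ : ℕ∞) f P (closedBall 0 s) := by
    refine ⟨fun x hx => ?_, fun i _ x hx => hder i x hx,
      fun i _ x hx => (hder i x hx).continuousWithinAt⟩
    have h1 : Tendsto (fun N => (iteratedFDerivWithin ℝ 0 (φ N) (closedBall 0 s) x).curry0) atTop
        (𝓝 (P x 0).curry0) :=
      ((continuousMultilinearCurryFin0 ℝ E F).continuous.tendsto _).comp (hP x 0 hx)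
    have h2 : Tendsto (fun N => φ N x) atTop (𝓝 (f x)) := by
      refine Metric.tendsto_atTop.2 fun ε hε => ?_
      obtain ⟨N0, h0⟩ := hlim (ε / 2) (by positivity)
      refine ⟨N0, fun N hN => ?_⟩
      rw [dist_eq_norm]
      exact (h0 N hN x hx).trans_lt (by linarith)
    exact tendsto_nhds_unique h1 h2
  refine ⟨hT.contDiffOn, fun i x hx => ?_⟩
  rw [← hT.eq_iteratedFDerivWithin_of_uniqueDiffOn (by exact_mod_cast le_top) hU hx]
  exact hP x i hx

end Limit


section Final

variable {E : Type*} [NormedAddCommGroup E] [NormedSpace ℝ E]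

lemma fp_flow_norm {r s : ℝ} {Y : E → E}
    (hYn : ∀ x ∈ closedBall (0 : E) r, ‖Y x‖ ≤ ‖x‖)
    {ψ : ℝ → E → E} (h0 : ∀ x ∈ closedBall (0 : E) s, ψ 0 x = x)
    (hψ : ∀ t ∈ Set.Icc (0 : ℝ) 1, ∀ x ∈ closedBall (0 : E) s,
      ψ t x ∈ ball (0 : E) r ∧
      HasDerivWithinAt (fun τ => ψ τ x) (Y (ψ t x)) (Set.Icc 0 1) t)
    {x : E} (hx : x ∈ closedBall (0 : E) s) : ‖ψ 1 x‖ ≤ Real.exp 1 * ‖x‖ := by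
  have := norm_le_gronwallBound_of_norm_deriv_right_le (f := fun τ => ψ τ x)
    (f' := fun τ => Y (ψ τ x)) (δ := ‖x‖) (K := 1) (ε := 0) (a := 0) (b := 1)
    (fun t ht => (hψ t ht x hx).2.continuousWithinAt)
    (fun t ht => ((hψ t (Ico_subset_Icc_self ht) x hx).2).mono_of_mem_nhdsWithin
      (Icc_mem_nhdsGE_of_mem ht))
    (by rw [h0 x hx])
    (fun t ht => by
      rw [one_mul, add_zero]
      exact hYn _ (ball_subset_closedBall (hψ t (Ico_subset_Icc_self ht) x hx).1)) 1 (by simp)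
  rw [gronwallBound_ε0] at this
  simpa [mul_comm] using this

lemma fp_lip0 {r : ℝ} (hr : 0 < r) {Y : E → E}
    (hYc : ContDiffOn ℝ (⊤ : ℕ∞) Y (closedBall 0 r))
    (h1 : ∀ x ∈ closedBall (0 : E) r, ‖iteratedFDerivWithin ℝ 1 Y (closedBall 0 r) x‖ ≤ 1) :
    ∀ x ∈ closedBall (0 : E) r, ∀ y ∈ closedBall (0 : E) r, ‖Y y - Y x‖ ≤ ‖y - x‖ := by
  intro x hx y hy
  have := fp_lip (fp_uniq hr) hYc 0 (convex_closedBall (0 : E) r) subset_rfl h1 hx hy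
  rw [one_mul] at this
  simpa only [iteratedFDerivWithin_zero_eq_comp, Function.comp_apply, ← map_sub,
    LinearIsometryEquiv.norm_map] using this

variable (E) in
lemma fp_flow [FiniteDimensional ℝ E] (K : ℝ) (hK : 0 ≤ K) (n : ℕ) : ∃ c : ℝ, 1 ≤ c ∧
    ∀ (r s b L : ℝ) (Y : E → E) (ψ : ℝ → E → E), 0 < s → 0 ≤ b → s + b ≤ r →
      (∀ x ∈ closedBall (0 : E) r, ‖Y x‖ ≤ b) →
      ContDiffOn ℝ (⊤ : ℕ∞) Y (closedBall 0 r) →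
      (∀ i : ℕ, iteratedFDerivWithin ℝ i Y (closedBall 0 r) 0 = 0) →
      (∀ x ∈ closedBall (0 : E) r, ‖iteratedFDerivWithin ℝ 1 Y (closedBall 0 r) x‖ ≤ 1) →
      (∀ x ∈ closedBall (0 : E) s, ψ 0 x = x) →
      (∀ t ∈ Set.Icc (0 : ℝ) 1, ∀ x ∈ closedBall (0 : E) s,
        ψ t x ∈ ball (0 : E) r ∧
        HasDerivWithinAt (fun τ => ψ τ x) (Y (ψ t x)) (Set.Icc 0 1) t) →
      1 ≤ L →
      (∀ j, j + 1 ≤ n → ∀ y ∈ closedBall (0 : E) r,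
        ‖iteratedFDerivWithin ℝ (j + 1) Y (closedBall 0 r) y‖ ≤ K * L ^ j) →
      ContDiffOn ℝ (⊤ : ℕ∞) (ψ 1) (closedBall 0 s) ∧
      ∀ x ∈ closedBall (0 : E) s, ∀ i, i + 1 ≤ n →
        ‖iteratedFDerivWithin ℝ (i + 1) (ψ 1) (closedBall 0 s) x‖ ≤ c * L ^ i := by
  obtain ⟨c, hc1, hc⟩ := fp_euler_bound E K hK n
  refine ⟨c, hc1, ?_⟩
  intro r s b L Y ψ hs hb hsb hYb hYc hYf hY1 h0 hψ hL hYd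
  have hr : 0 < r := by linarith
  have := FiniteDimensional.complete ℝ E
  have hlim := fp_limit (φ := fun N => fpEuler Y (N + 1) (N + 1)) (f := ψ 1) hs
    (fun N => fp_euler_contDiff hb hsb hYb hYc (by omega) (N + 1) le_rfl)
    (fun i => by
      choose κ hκ0 hκ using fp_flat_bdd hr hYc hYf 0
      obtain ⟨U, -, hU⟩ := fp_euler_bound E (∑ j ∈ Finset.range (i + 2), κ j)
        (Finset.sum_nonneg fun j _ => hκ0 j) (i + 1)
      refine ⟨U, fun N x hx => ?_⟩
      have := hU r s b 1 Y hs hb hsb hYb hYc le_rfl (fun j hj y hy => by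
        rw [one_pow, mul_one]
        refine (hκ (j + 1) y hy).trans ?_
        rw [pow_zero, mul_one]
        exact Finset.single_le_sum (f := κ) (fun j _ => hκ0 j) (by simp; omega))
        (N + 1) (by omega) (N + 1) le_rfl x hx i le_rfl
      simpa using this)
    (fun ε hε => by
      have hC : 0 ≤ Real.exp 1 * b := by positivity
      obtain ⟨N0, hN0⟩ := exists_nat_gt ((Real.exp 1 * b) / ε)
      refine ⟨N0, fun N hN x hx => ?_⟩
      have h1 := fp_euler_conv hb hsb hYb (fp_lip0 hr hYc hY1) h0 hψ (N := N + 1) (by omega) hx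
      refine h1.trans ?_
      rw [← div_eq_mul_inv, div_le_iff₀ (by positivity)]
      rw [div_lt_iff₀ hε] at hN0
      have : (N0 : ℝ) ≤ (N + 1 : ℕ) := by exact_mod_cast (by omega : N0 ≤ N + 1)
      nlinarith)
  refine ⟨hlim.1, fun x hx i hi => ?_⟩
  refine le_of_tendsto (hlim.2 (i + 1) x hx).norm (Filter.Eventually.of_forall fun N => ?_)
  exact hc r s b L Y hs hb hsb hYb hYc hL hYd (N + 1) (by omega) (N + 1) le_rfl x hx i hi

end Final

section Norms

variable {m : ℕ}

lemma fp_cn_le {r : ℝ} (hr : 0 < r) {Y : EuclideanSpace ℝ (Fin m) → EuclideanSpace ℝ (Fin m)}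
    (hYc : ContDiffOn ℝ (⊤ : ℕ∞) Y (closedBall 0 r)) (hYf : FlatVF m r Y) {n j : ℕ} (hj : j ≤ n)
    {x : EuclideanSpace ℝ (Fin m)} (hx : x ∈ closedBall (0 : EuclideanSpace ℝ (Fin m)) r) :
    ‖iteratedFDerivWithin ℝ j Y (closedBall 0 r) x‖ ≤ cnNorm m r n Y := by
  choose κ hκ0 hκ using fp_flat_bdd hr hYc hYf 0
  have hb : BddAbove (range fun p : (closedBall (0 : EuclideanSpace ℝ (Fin m)) r :
      Set (EuclideanSpace ℝ (Fin m))) × Fin (n + 1) =>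
    ‖iteratedFDerivWithin ℝ p.2 Y (closedBall 0 r) p.1‖) := by
    refine ⟨∑ j ∈ Finset.range (n + 1), κ j, ?_⟩
    rintro _ ⟨⟨⟨y, hy⟩, i⟩, rfl⟩
    refine (hκ i y hy).trans ?_
    rw [pow_zero, mul_one]
    exact Finset.single_le_sum (f := κ) (fun j _ => hκ0 j) (Finset.mem_range.2 i.2)
  have h2 := le_ciSup hb (⟨⟨x, hx⟩, ⟨j, by omega⟩⟩ : _ × Fin (n + 1))
  change ‖iteratedFDerivWithin ℝ j Y (closedBall 0 r) x‖ ≤ cnNorm m r n Y at h2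
  exact h2

lemma fp_cn_nonneg (r : ℝ) (n : ℕ) (Y : EuclideanSpace ℝ (Fin m) → EuclideanSpace ℝ (Fin m)) :
    0 ≤ cnNorm m r n Y := Real.iSup_nonneg fun _ => norm_nonneg _

lemma fp_flat_nonneg (r : ℝ) (n k : ℕ) (f : EuclideanSpace ℝ (Fin m) → ℝ) :
    0 ≤ flatNorm m r n k f := Real.iSup_nonneg fun _ => by positivity

lemma fp_flat_le {r : ℝ} (hr : 0 < r) {f : EuclideanSpace ℝ (Fin m) → ℝ}
    (hf : ContDiffOn ℝ (⊤ : ℕ∞) f (closedBall 0 r))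
    (hff : ∀ i : ℕ, iteratedFDerivWithin ℝ i f (closedBall 0 r) 0 = 0) {n j : ℕ} (k : ℕ)
    (hj : j ≤ n)
    {x : EuclideanSpace ℝ (Fin m)} (hx : x ∈ closedBall (0 : EuclideanSpace ℝ (Fin m)) r) :
    ‖iteratedFDerivWithin ℝ j f (closedBall 0 r) x‖ ≤ flatNorm m r n k f * ‖x‖ ^ k := by
  rcases eq_or_ne x 0 with rfl | hx0
  · rw [hff, norm_zero]
    exact mul_nonneg (fp_flat_nonneg _ _ _ _) (by positivity)
  choose κ hκ0 hκ using fp_flat_bdd hr hf hff k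
  have hb : BddAbove (range fun p : (closedBall (0 : EuclideanSpace ℝ (Fin m)) r \ {0} :
      Set (EuclideanSpace ℝ (Fin m))) × Fin (n + 1) =>
    ‖(p.1 : EuclideanSpace ℝ (Fin m))‖ ^ (-(k : ℤ)) *
      ‖iteratedFDerivWithin ℝ p.2 f (closedBall 0 r) p.1‖) := by
    refine ⟨∑ j ∈ Finset.range (n + 1), κ j, ?_⟩
    rintro _ ⟨⟨⟨y, hy⟩, i⟩, rfl⟩
    have hy0 : 0 < ‖y‖ := norm_pos_iff.2 hy.2
    have h1 := hκ i y hy.1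
    change ‖y‖ ^ (-(k : ℤ)) * ‖iteratedFDerivWithin ℝ i f (closedBall 0 r) y‖ ≤ _
    rw [zpow_neg, zpow_natCast, inv_mul_le_iff₀ (by positivity), mul_comm]
    refine h1.trans ?_
    gcongr
    exact Finset.single_le_sum (f := κ) (fun j _ => hκ0 j) (Finset.mem_range.2 i.2)
  have h2 := le_ciSup hb (⟨⟨x, hx, hx0⟩, ⟨j, by omega⟩⟩ : _ × Fin (n + 1))
  have hx' : 0 < ‖x‖ := norm_pos_iff.2 hx0
  change ‖x‖ ^ (-(k : ℤ)) * ‖iteratedFDerivWithin ℝ j f (closedBall 0 r) x‖ ≤ flatNorm m r n k f at h2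
  rw [zpow_neg, zpow_natCast, inv_mul_le_iff₀ (by positivity), mul_comm] at h2
  exact h2

lemma fp_flat_le_of {s : ℝ} {f : EuclideanSpace ℝ (Fin m) → ℝ} {n k : ℕ} {K : ℝ} (hK : 0 ≤ K)
    (h : ∀ j ≤ n, ∀ x ∈ closedBall (0 : EuclideanSpace ℝ (Fin m)) s,
      ‖iteratedFDerivWithin ℝ j f (closedBall 0 s) x‖ ≤ K * ‖x‖ ^ k) :
    flatNorm m s n k f ≤ K := by
  refine Real.iSup_le ?_ hK
  rintro ⟨⟨y, hy⟩, i⟩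
  have hy0 : 0 < ‖y‖ := norm_pos_iff.2 hy.2
  change ‖y‖ ^ (-(k : ℤ)) * ‖iteratedFDerivWithin ℝ i f (closedBall 0 s) y‖ ≤ _
  rw [zpow_neg, zpow_natCast, inv_mul_le_iff₀ (by positivity), mul_comm]
  exact h i (by have := i.2; omega) y hy.1

lemma fp_root {n : ℕ} (hn : 1 ≤ n) {y : ℝ} (hy : 1 ≤ y) : ∃ L : ℝ, 1 ≤ L ∧ L ^ n = y :=
  ⟨y ^ ((n : ℝ)⁻¹), Real.one_le_rpow hy (by positivity),
    Real.rpow_inv_natCast_pow (by linarith) (by omega)⟩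

lemma fp_core (m n k : ℕ) : ∃ C : ℝ, 0 < C ∧
      ∀ r s : ℝ, 0 < s → s < r →
        ∀ Y : EuclideanSpace ℝ (Fin m) → EuclideanSpace ℝ (Fin m),
          ContDiffOn ℝ (⊤ : ℕ∞) Y (closedBall 0 r) → FlatVF m r Y →
          cnNorm m r 0 Y < (r - s) * 1 → cnNorm m r 1 Y < 1 →
          ∀ ψ : ℝ → EuclideanSpace ℝ (Fin m) → EuclideanSpace ℝ (Fin m),
            (∀ x ∈ closedBall (0 : EuclideanSpace ℝ (Fin m)) s, ψ 0 x = x) →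
            (∀ t ∈ Set.Icc (0 : ℝ) 1,
              ∀ x ∈ closedBall (0 : EuclideanSpace ℝ (Fin m)) s,
                ψ t x ∈ ball (0 : EuclideanSpace ℝ (Fin m)) r ∧
                HasDerivWithinAt (fun τ => ψ τ x) (Y (ψ t x)) (Set.Icc 0 1) t) →
            ∀ f : EuclideanSpace ℝ (Fin m) → ℝ,
              ContDiffOn ℝ (⊤ : ℕ∞) f (closedBall 0 r) →
              (∀ i : ℕ, iteratedFDerivWithin ℝ i f (closedBall 0 r) 0 = 0) →
                flatNorm m s n k (fun x => f (ψ 1 x)) ≤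
                  C * (flatNorm m r n k f +
                    flatNorm m r 0 k f * cnNorm m r (n + 1) Y) := by
  obtain ⟨c, hc1, hc⟩ := fp_flow (EuclideanSpace ℝ (Fin m)) (12 ^ (n * n)) (by positivity) n
  set e := Real.exp 1 with he
  have he0 : 0 < e := Real.exp_pos 1
  set C1 : ℝ := (n.factorial : ℝ) * 12 ^ (n * n) * e ^ k * c ^ n with hC1
  have hc0 : 0 < c := by linarith
  have hfac : (1 : ℝ) ≤ n.factorial := by exact_mod_cast Nat.factorial_pos n
  have h12 : (1 : ℝ) ≤ 12 ^ (n * n) := one_le_pow₀ (by norm_num)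
  have hcn : (1 : ℝ) ≤ c ^ n := one_le_pow₀ hc1
  have hC1pos : 0 < C1 := by positivity
  have hC1e : e ^ k ≤ C1 := by
    have : (1 : ℝ) ≤ n.factorial * 12 ^ (n * n) * c ^ n :=
      one_le_mul_of_one_le_of_one_le (one_le_mul_of_one_le_of_one_le hfac h12) hcn
    calc e ^ k ≤ (n.factorial * 12 ^ (n * n) * c ^ n) * e ^ k :=
          le_mul_of_one_le_left (by positivity) this
      _ = C1 := by rw [hC1]; ring
  refine ⟨2 * C1, by positivity, ?_⟩
  intro r s hs hsr Y hYc hYf hY0 hY1 ψ h0 hψ f hf hff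
  have hr : 0 < r := hs.trans hsr
  set y := cnNorm m r (n + 1) Y with hy
  have hy0 : 0 ≤ y := fp_cn_nonneg _ _ _
  set f0 := flatNorm m r 0 k f with hf0
  set fn := flatNorm m r n k f with hfn
  have hf00 : 0 ≤ f0 := fp_flat_nonneg _ _ _ _
  have hf0n : f0 ≤ fn := fp_flat_le_of (fp_flat_nonneg _ _ _ _)
    (fun j hj x hx => fp_flat_le hr hf hff k (by omega) hx)
  have hYb : ∀ x ∈ closedBall (0 : EuclideanSpace ℝ (Fin m)) r, ‖Y x‖ ≤ cnNorm m r 0 Y := by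
    intro x hx
    simpa using fp_cn_le hr hYc hYf (n := 0) (j := 0) le_rfl hx
  have hY1' : ∀ x ∈ closedBall (0 : EuclideanSpace ℝ (Fin m)) r,
      ‖iteratedFDerivWithin ℝ 1 Y (closedBall 0 r) x‖ ≤ 1 := fun x hx =>
    (fp_cn_le hr hYc hYf (n := 1) (j := 1) le_rfl hx).trans hY1.le
  have hY00 : Y 0 = 0 := by
    have := hYf 0
    rw [← norm_eq_zero] at this
    simpa using this
  have hlip := fp_lip0 hr hYc hY1'
  have hYn : ∀ x ∈ closedBall (0 : EuclideanSpace ℝ (Fin m)) r, ‖Y x‖ ≤ ‖x‖ := by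
    intro x hx
    have := hlip 0 (by simp [hr.le]) x hx
    simpa [hY00] using this
  have hmaps : MapsTo (ψ 1) (closedBall 0 s) (closedBall 0 r) := fun x hx =>
    ball_subset_closedBall (hψ 1 (by simp) x hx).1
  have hψn : ∀ x ∈ closedBall (0 : EuclideanSpace ℝ (Fin m)) s, ‖ψ 1 x‖ ^ k ≤ e ^ k * ‖x‖ ^ k :=
    fun x hx => by
      rw [← mul_pow]
      exact pow_le_pow_left₀ (norm_nonneg _) (fp_flow_norm hYn h0 hψ hx) k
  -- the estimate with a small parameter
  have heps : ∀ ε > (0 : ℝ), flatNorm m s n k (fun x => f (ψ 1 x)) ≤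
      2 * C1 * ((fn + ε) + (f0 + ε) * y) := by
    intro ε hε
    have hfnε : 0 < fn + ε := by linarith
    have hf0ε : 0 < f0 + ε := by linarith
    refine fp_flat_le_of (by positivity) ?_
    intro p hp x hx
    have hxk : 0 ≤ ‖x‖ ^ k := by positivity
    have hprod : 0 ≤ (f0 + ε) * y := by positivity
    rcases Nat.eq_zero_or_pos p with rfl | hp1
    · rw [norm_iteratedFDerivWithin_zero]
      have h1 := fp_flat_le hr hf hff k (n := 0) (j := 0) le_rfl (hmaps hx)
      rw [norm_iteratedFDerivWithin_zero] at h1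
      calc _ ≤ f0 * ‖ψ 1 x‖ ^ k := h1
        _ ≤ f0 * (e ^ k * ‖x‖ ^ k) := by gcongr; exact hψn x hx
        _ = e ^ k * f0 * ‖x‖ ^ k := by ring
        _ ≤ (2 * C1) * ((fn + ε) + (f0 + ε) * y) * ‖x‖ ^ k := by
          gcongr
          · linarith
          · linarith
    have hn : 1 ≤ n := by omega
    obtain ⟨L, hL1, hLn⟩ := fp_root hn (y := 1 + y) (by linarith)
    obtain ⟨A, hA1, hAn⟩ := fp_root hn (y := (fn + ε) / (f0 + ε))
      (by rw [le_div_iff₀ hf0ε]; linarith)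
    have hAn' : (f0 + ε) * A ^ n = fn + ε := by rw [hAn]; field_simp
    have hL0 : 0 < L := by linarith
    have hA0 : 0 < A := by linarith
    -- interpolation for `Y`
    have hYint := fp_interp hr hYc hYf 0 1 n
      (fun j => let ⟨K, _, hK⟩ := fp_flat_bdd hr hYc hYf 0 j; ⟨K, hK⟩) (a := 1) (A := L) one_pos hL0
      (fun z hz => by simpa using hY1' z hz)
      (fun z hz => by
        have := fp_cn_le hr hYc hYf (n := n + 1) (j := 1 + n) (by omega) hz
        rw [hLn, pow_zero]
        linarith)
    obtain ⟨hψc, hψd⟩ := hc r s (cnNorm m r 0 Y) L Y ψ hs (fp_cn_nonneg _ _ _) (by linarith) hYb hYc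
      hYf hY1' h0 hψ hL1 (fun j hj z hz => by
        have := hYint j (by omega) z hz
        rw [add_comm 1 j] at this
        simpa using this)
    -- interpolation for `f`
    have hfint := fp_interp hr hf hff k 0 n
      (fun j => let ⟨K, _, hK⟩ := fp_flat_bdd hr hf hff k j; ⟨K, hK⟩) (a := f0 + ε) (A := A) hf0ε hA0
      (fun z hz => (fp_flat_le hr hf hff k (n := 0) (j := 0) le_rfl hz).trans (by
        gcongr; linarith))
      (fun z hz => (fp_flat_le hr hf hff k (n := n) (j := 0 + n) (by omega) hz).trans (by
        rw [hAn']; gcongr; linarith))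
    set B := max A L with hB
    have hAB : A ≤ B := le_max_left _ _
    have hLB : L ≤ B := le_max_right _ _
    have hB1 : 1 ≤ B := hA1.trans hAB
    have hB0 : 0 < B := by linarith
    have hcomp := fp_comp (fp_uniq hs) (fp_uniq hr) hf hψc hmaps hx hp1
      (K := 12 ^ (n * n) * (f0 + ε) * (e ^ k * ‖x‖ ^ k)) (A := B) (D := c * B) (by positivity) hB0
      (fun j hj1 hj => by
        have h1 := hfint j (by omega) _ (hmaps hx)
        rw [zero_add] at h1
        calc _ ≤ _ := h1
          _ ≤ 12 ^ (n * n) * (f0 + ε) * B ^ j * (e ^ k * ‖x‖ ^ k) := by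
            gcongr
            exact hψn x hx
          _ = _ := by ring)
      (fun i hi1 hi => by
        obtain ⟨i, rfl⟩ := Nat.exists_eq_add_of_le' hi1
        have h1 := hψd x hx i (by omega)
        calc _ ≤ B * (c * L ^ i) := by gcongr
          _ ≤ B * (c * B ^ i) := by gcongr
          _ = c * B ^ (i + 1) := by ring
          _ ≤ c ^ (i + 1) * B ^ (i + 1) := by gcongr; exact le_self_pow₀ hc1 (by omega)
          _ = (c * B) ^ (i + 1) := by ring)
    have hBn : B ^ n ≤ A ^ n + L ^ n := by
      rcases max_choice A L with h | h
      · rw [hB, h]; have : 0 ≤ L ^ n := by positivity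
        linarith
      · rw [hB, h]; have : 0 ≤ A ^ n := by positivity
        linarith
    have hfin : (f0 + ε) * B ^ n ≤ 2 * ((fn + ε) + (f0 + ε) * y) := by
      calc (f0 + ε) * B ^ n ≤ (f0 + ε) * (A ^ n + L ^ n) := by gcongr
        _ = (fn + ε) + (f0 + ε) * (1 + y) := by rw [mul_add, hAn', hLn]
        _ ≤ _ := by linarith
    calc _ ≤ _ := hcomp
      _ ≤ (n.factorial : ℝ) * (12 ^ (n * n) * (f0 + ε) * (e ^ k * ‖x‖ ^ k)) * (c * B) ^ n := by
        gcongr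
        exact one_le_mul_of_one_le_of_one_le hc1 hB1
      _ = C1 * ((f0 + ε) * B ^ n) * ‖x‖ ^ k := by rw [hC1, mul_pow]; ring
      _ ≤ C1 * (2 * ((fn + ε) + (f0 + ε) * y)) * ‖x‖ ^ k := by gcongr
      _ = _ := by ring
  refine le_of_forall_pos_le_add fun δ hδ => ?_
  refine (heps (δ / (2 * C1 * (1 + y))) (by positivity)).trans (le_of_eq ?_)
  field_simp
  ring

end Norms


/-- there is `θ > 0` (depending only on `m`) and constants
`C(n,k,r) > 0` depending continuously on `r`, such that for `0 < s < r` and a smooth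
flat vector field `Y` on `B̄_r` with `‖Y‖_{0,r} < (r−s)θ`, `‖Y‖_{1,r} < θ`, the flow
`ψ : [0,1] × B̄_s → B_r` of `Y` satisfies: for every smooth `f` on `B̄_r` flat at the
origin, `⟨f ∘ ψ¹⟩_{n,k,s} ≤ C(n,k,r) (⟨f⟩_{n,k,r} + ⟨f⟩_{0,k,r} ‖Y‖_{n+1,r})`. -/
theorem flow_pullback_estimate (m : ℕ) (hm : 1 ≤ m) :
    ∃ θ > (0 : ℝ), ∃ C : ℕ → ℕ → ℝ → ℝ,
      (∀ n k : ℕ, ContinuousOn (C n k) (Set.Ioi 0) ∧ ∀ r : ℝ, 0 < r → 0 < C n k r) ∧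
      ∀ r s : ℝ, 0 < s → s < r →
        ∀ Y : EuclideanSpace ℝ (Fin m) → EuclideanSpace ℝ (Fin m),
          ContDiffOn ℝ (⊤ : ℕ∞) Y (closedBall 0 r) → FlatVF m r Y →
          cnNorm m r 0 Y < (r - s) * θ → cnNorm m r 1 Y < θ →
          ∀ ψ : ℝ → EuclideanSpace ℝ (Fin m) → EuclideanSpace ℝ (Fin m),
            (∀ x ∈ closedBall (0 : EuclideanSpace ℝ (Fin m)) s, ψ 0 x = x) →
            (∀ t ∈ Set.Icc (0 : ℝ) 1,
              ∀ x ∈ closedBall (0 : EuclideanSpace ℝ (Fin m)) s,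
                ψ t x ∈ ball (0 : EuclideanSpace ℝ (Fin m)) r ∧
                HasDerivWithinAt (fun τ => ψ τ x) (Y (ψ t x)) (Set.Icc 0 1) t) →
            ∀ f : EuclideanSpace ℝ (Fin m) → ℝ,
              ContDiffOn ℝ (⊤ : ℕ∞) f (closedBall 0 r) →
              (∀ i : ℕ, iteratedFDerivWithin ℝ i f (closedBall 0 r) 0 = 0) →
              ∀ n k : ℕ,
                flatNorm m s n k (fun x => f (ψ 1 x)) ≤
                  C n k r * (flatNorm m r n k f +
                    flatNorm m r 0 k f * cnNorm m r (n + 1) Y) := by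
  choose C hC0 hC using fp_core m
  refine ⟨1, one_pos, fun n k _ => C n k, fun n k => ⟨continuousOn_const, fun r _ => hC0 n k⟩, ?_⟩
  intro r s hs hsr Y hYc hYf hY0 hY1 ψ h0 hψ f hf hff n k
  exact hC n k r s hs hsr Y hYc hYf hY0 hY1 ψ h0 hψ f hf hff
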